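/- The equation Y² = X⁵ − 2⁴·3⁶·5⁷ (that is, Y² = X⁵ − 911250000) has no rational solutions (X, Y) ∈ ℚ × ℚ. -/

import Mathlib

open Zsqrtd in
theorem z_pow5 (d u v : ℤ) : (⟨u, v⟩ : ℤ√d) ^ 5 =
    ⟨u * (u^4 + 10*d*u^2*v^2 + 5*d^2*v^4), v * (5*u^4 + 10*d*u^2*v^2 + d^2*v^4)⟩ := by
  ext <;> simp [pow_succ] <;> ring

theorem z_norm_pow5 {d : ℤ} (z : ℤ√d) : (z ^ 5).norm = z.norm ^ 5 := by
  have := map_pow (Zsqrtd.normMonoidHom (d := d)) z 5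
  exact this

theorem red_aux (a b : ℤ) (ha : a ≠ 0) : ∃ q : ℤ, 4 * (b - a * q) ^ 2 ≤ a ^ 2 := by
  have h1 := Int.emod_add_mul_ediv b a
  have h2 := Int.emod_nonneg b ha
  have h3 := Int.emod_lt_abs b ha
  by_cases h : 2 * (b % a) ≤ |a|
  · refine ⟨b / a, ?_⟩
    have : b - a * (b / a) = b % a := by linarith
    rw [this, ← sq_abs a]; nlinarith
  · have key : ∃ q, b - a * q = b % a - |a| := by
      rcases abs_choice a with h' | h'
      · refine ⟨b / a + 1, ?_⟩; rw [h']; linarith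
      · refine ⟨b / a - 1, ?_⟩; rw [h']; linarith
    obtain ⟨q, hq⟩ := key
    refine ⟨q, ?_⟩
    rw [hq, ← sq_abs a]; nlinarith

theorem red (d : ℤ) (hd : d = 5 ∨ d = -5) (n : ℕ) : ∀ a b c : ℤ, a.natAbs = n → a * c = b^2 - d →
    ∃ x y k : ℤ, a * x^2 + 2*b*x*y + c*y^2 = k ∧ |k| ≤ 2 ∧ k ≠ 0 := by
  induction n using Nat.strong_induction_on with
  | _ n ih =>
    intro a b c hn h
    have ha : a ≠ 0 := by
      rintro rfl
      have h0 : b^2 = d := by linarith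
      rcases hd with rfl | rfl
      · have h1 : b ≤ 2 := by nlinarith
        have h2 : -2 ≤ b := by nlinarith
        interval_cases b <;> omega
      · nlinarith [sq_nonneg b]
    by_cases h2 : |a| ≤ 2
    · exact ⟨1, 0, a, by ring, h2, ha⟩
    · push Not at h2
      obtain ⟨q, hq⟩ := red_aux a b ha
      set b' := b - a * q with hb'
      set c' := c - 2*b*q + a*q^2 with hc'
      have h' : a * c' = b'^2 - d := by rw [hb', hc']; linear_combination h
      have hlt : |c'| < |a| := by
        have h3 : |a| * |c'| = |b'^2 - d| := by rw [← abs_mul, h']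
        have h4 : |b'^2 - d| < |a| * |a| := by
          rw [abs_mul_abs_self, abs_lt]
          have : 9 ≤ a^2 := by rw [← sq_abs]; nlinarith
          constructor <;> rcases hd with rfl | rfl <;> nlinarith [sq_nonneg b']
        rw [← h3] at h4
        exact lt_of_mul_lt_mul_left h4 (abs_nonneg a)
      have hlt' : c'.natAbs < n := by
        rw [Int.abs_eq_natAbs, Int.abs_eq_natAbs] at hlt; omega
      obtain ⟨x, y, k, hk, hk2⟩ := ih _ hlt' c' b' a rfl (by rw [mul_comm]; exact h')
      refine ⟨y - q * x, x, k, ?_, hk2⟩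
      rw [← hk, hb', hc']; ring

theorem gen (d m A c D : ℤ) (hd : d = 5 ∨ d = -5) (hA : A ≠ 0) (hm : m ≠ 0)
    (h : c^2 - d * D^2 = m * A^5) (hco : IsCoprime A D) :
    ∃ (β κ : ℤ√d) (k : ℤ), |k| ≤ 2 ∧ k ≠ 0 ∧ β.norm = A * k ∧ (m : ℤ√d) * β^5 = ⟨c, D⟩ * κ ∧
      κ.norm = m * k^5 := by
  obtain ⟨z, e, hz⟩ := hco
  obtain ⟨x, y, k, hk, hk2, hk0⟩ := red d hd _ A (e * c) (e^2*m*A^4 + d*(-2*z+A*z^2)) rfl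
    (by
      have : e * D = 1 - z * A := by linarith
      have h2 : (e*D)^2 = (1 - z * A)^2 := by rw [this]
      linear_combination (-e^2) * h - d * h2)
  set α : ℤ√d := ⟨c, D⟩ with hα
  have hαn : α * star α = (m : ℤ√d) * (A : ℤ√d)^5 := by
    rw [← Zsqrtd.norm_eq_mul_conj]
    have : α.norm = m * A^5 := by rw [Zsqrtd.norm_def]; simp only [hα]; linarith
    rw [this]; push_cast; ring
  set β : ℤ√d := ⟨A * x + e * c * y, y⟩ with hβ
  set μ : ℤ√d := ⟨x, z * y⟩ with hμ
  set ν : ℤ√d := ((y * e : ℤ) : ℤ√d) with hν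
  have hβe : β = (A : ℤ√d) * μ + α * ν := by
    have : e * D = 1 - z * A := by linarith
    ext
    · simp [hβ, hμ, hν, hα]; ring
    · simp [hβ, hμ, hν, hα]; linear_combination (-y) * this
  have hβn : β.norm = A * k := by
    have : e * D = 1 - z * A := by linarith
    have h2 : (e*D)^2 = (1 - z * A)^2 := by rw [this]
    rw [Zsqrtd.norm_def, ← hk]; simp only [hβ]
    linear_combination y^2 * e^2 * h + y^2*d*h2
  have hκ : ∃ κ, (m : ℤ√d) * β^5 = α * κ := by
    refine ⟨star α * μ^5 + m * ν * (5 * (A * μ)^4 + 10 * (A*μ)^3 * (α*ν) + 10 * (A*μ)^2*(α*ν)^2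
      + 5 * (A*μ) * (α*ν)^3 + (α*ν)^4), ?_⟩
    rw [hβe]
    linear_combination (- μ^5) * hαn
  obtain ⟨κ, hκ⟩ := hκ
  refine ⟨β, κ, k, hk2, hk0, hβn, hκ, ?_⟩
  have h5 := congrArg Zsqrtd.norm hκ
  rw [Zsqrtd.norm_mul, Zsqrtd.norm_mul, z_norm_pow5, hβn, Zsqrtd.norm_intCast] at h5
  have h6 : α.norm = m * A^5 := by rw [Zsqrtd.norm_def]; simp only [hα]; linarith
  rw [h6] at h5
  have h7 : m * A^5 ≠ 0 := mul_ne_zero hm (pow_ne_zero _ hA)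
  apply mul_left_cancel₀ h7
  rw [← h5]; ring

def w5 : Pell.Solution₁ 5 := Pell.Solution₁.mk 9 4 (by norm_num)

theorem w5_fund : Pell.IsFundamental w5 := by
  refine ⟨by simp [w5], by simp [w5], ?_⟩
  intro a ha
  have h := a.prop
  by_contra hlt
  simp only [w5, Pell.Solution₁.x_mk] at hlt
  generalize a.x = x at *
  generalize a.y = y at *
  have h1 : y ≤ 3 := by nlinarith
  have h2 : -3 ≤ y := by nlinarith
  push Not at hlt
  interval_cases x <;> interval_cases y <;> omega

theorem unit1 (e f : ℤ) (h : e^2 - 5 * f^2 = 1) (h5 : (5:ℤ) ∣ f) :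
    ∃ η : ℤ√5, (⟨e, f⟩ : ℤ√5) = η^5 := by
  set s : Pell.Solution₁ 5 := Pell.Solution₁.mk e f h with hs
  have key : ∃ n : ℤ, ∃ t : Pell.Solution₁ 5, ∃ r : ℕ, r < 5 ∧ s = t^5 * w5 ^ r := by
    obtain ⟨n, hn⟩ := w5_fund.eq_zpow_or_neg_zpow s
    have hmod := Int.emod_add_mul_ediv n 5
    obtain ⟨r, hr⟩ := Int.eq_ofNat_of_zero_le (Int.emod_nonneg n (by norm_num : (5:ℤ) ≠ 0))
    have hr5 : r < 5 := by have := Int.emod_lt_of_pos n (by norm_num : (0:ℤ) < 5); omega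
    have hp : w5 ^ n = (w5 ^ (n/5))^5 * w5 ^ r := by
      conv_lhs => rw [← hmod, hr]
      rw [zpow_add, mul_comm, mul_comm 5, zpow_mul]; norm_cast
    rcases hn with hn | hn
    · exact ⟨n, _, r, hr5, hn.trans hp⟩
    · refine ⟨n, -(w5 ^ (n/5)), r, hr5, ?_⟩
      rw [hn, hp, Odd.neg_pow (by decide), neg_mul]
  obtain ⟨n, t, r, hr, hst⟩ := key
  have hst' : (⟨e, f⟩ : ℤ√5) = (⟨t.x, t.y⟩ : ℤ√5)^5 * (⟨9,4⟩ : ℤ√5)^r := by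
    have := congrArg (fun z : Pell.Solution₁ 5 => (z : ℤ√5)) hst
    have hx : ∀ z : Pell.Solution₁ 5, (z : ℤ√5) = ⟨z.x, z.y⟩ := fun z => rfl
    have hw : (w5 : ℤ√5) = ⟨9, 4⟩ := rfl
    have hm : ((t^5 * w5^r : Pell.Solution₁ 5) : ℤ√5) = (t : ℤ√5)^5 * (w5 : ℤ√5)^r := rfl
    have h2 : (s : ℤ√5) = (t : ℤ√5)^5 * (w5 : ℤ√5)^r := this.trans hm
    rw [hw, hx t] at h2
    exact h2
  have htx : ¬ (5:ℤ) ∣ t.x := by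
    intro hx
    obtain ⟨w, hw⟩ := hx
    have := t.prop
    rw [hw] at this
    have : 5 * (5 * w^2 - t.y^2) = 1 := by linarith
    omega
  rw [z_pow5] at hst'
  have h5p : Prime (5:ℤ) := by norm_num
  have hfin : r = 0 := by
    by_contra hr0
    apply htx
    have him := congrArg Zsqrtd.im hst'
    generalize t.x = x at *
    generalize t.y = y at *
    have : (5:ℤ) ∣ x^5 := by
      interval_cases r <;> simp [pow_succ] at him hr0 <;> ring_nf at him
      all_goals
        obtain ⟨g, rfl⟩ := h5
        have hx5 : x ^ 5 % 5 = 0 := by omega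
        exact Int.dvd_of_emod_eq_zero hx5
    exact h5p.dvd_of_dvd_pow this
  subst hfin
  exact ⟨⟨t.x, t.y⟩, by rw [hst', z_pow5]; simp⟩

theorem unit2 (κ : ℤ√5) (h : κ.norm = 1 ∨ κ.norm = -1) (h5 : (5:ℤ) ∣ κ.im) :
    ∃ η : ℤ√5, κ = η^5 := by
  rcases h with h | h
  · obtain ⟨e, f⟩ := κ
    apply unit1 e f _ h5
    rw [Zsqrtd.norm_def] at h; linarith
  · obtain ⟨e, f⟩ := κ
    rw [Zsqrtd.norm_def] at h
    simp only at h h5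
    obtain ⟨η, hη⟩ := unit1 (682 * e + 5 * 305 * f) (305 * e + 682 * f)
      (by linear_combination -h) (by omega)
    refine ⟨η * ⟨-2, 1⟩, ?_⟩
    rw [mul_pow, ← hη, z_pow5]
    ext <;> simp <;> ring

theorem fifth5 (X Y t : ℤ) (h : X^2 - 5 * Y^2 = t^5) (hco : IsCoprime X Y) (ht : t % 2 = 1)
    (hY : (5:ℤ) ∣ Y) : ∃ x y : ℤ, X = x * (x^4 + 50*x^2*y^2 + 125*y^4) ∧
      Y = 5 * y * (x^4 + 10*x^2*y^2 + 5*y^4) := by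
  have hX : ¬ (5:ℤ) ∣ X := by
    intro hX
    have := hco.isUnit_of_dvd' hX hY
    rw [Int.isUnit_iff] at this; omega
  have hcoT : IsCoprime t Y := by
    have : IsCoprime (t^5) Y := by
      have h1 : IsCoprime (X^2) Y := hco.pow_left
      have h2 := h1.add_mul_right_left (-5 * Y)
      rw [← h, show X^2 - 5 * Y^2 = X^2 + (-5 * Y) * Y by ring]
      exact h2
    exact (IsCoprime.pow_left_iff (by norm_num)).1 this
  obtain ⟨β, κ, k, hk, hk0, hβ, hβκ, hκ⟩ := gen 5 1 t X Y (Or.inl rfl) (by rintro rfl; omega) (by norm_num)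
    (by linarith) hcoT
  have hk1 : k = 1 ∨ k = -1 := by
    rw [abs_le] at hk
    obtain ⟨h1, h2⟩ := hk
    obtain ⟨p, q⟩ := β
    rw [Zsqrtd.norm_def] at hβ hκ
    simp only at hβ
    have key : ∀ s : ℤ, (s * s) % 4 = 0 ∨ (s*s) % 4 = 1 := by
      intro s
      rcases Int.emod_two_eq_zero_or_one s with hs | hs
      · left; obtain ⟨r, rfl⟩ := Int.dvd_of_emod_eq_zero hs
        rw [show 2 * r * (2 * r) = 4 * (r * r) by ring]; omega
      · right
        obtain ⟨r, rfl⟩ : ∃ r, s = 2 * r + 1 := ⟨s / 2, by omega⟩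
        rw [show (2 * r + 1) * (2 * r + 1) = 4 * (r * r + r) + 1 by ring]; omega
    have hp := key p
    have hq := key q
    rw [mul_assoc] at hβ
    clear hβκ
    generalize p * p = P at *
    generalize q * q = Q at *
    interval_cases k
    · omega
    · right; rfl
    · exact absurd rfl hk0
    · left; rfl
    · omega
  have hκn : κ.norm = 1 ∨ κ.norm = -1 := by
    rcases hk1 with rfl | rfl
    · left; rw [hκ]; norm_num
    · right; rw [hκ]; norm_num
  have h5p : Prime (5:ℤ) := by norm_num
  have hκim : (5:ℤ) ∣ κ.im := by
    obtain ⟨p, q⟩ := β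
    obtain ⟨e, f⟩ := κ
    rw [z_pow5] at hβκ
    have := congrArg Zsqrtd.im hβκ
    simp at this
    obtain ⟨g, rfl⟩ := hY
    have h2 : (5:ℤ) ∣ X * f := ⟨q * (p^4 + 10*p^2*q^2+5*q^4) - g * e, by linarith⟩
    exact (h5p.dvd_or_dvd h2).resolve_left hX
  obtain ⟨η, hη⟩ := unit2 κ hκn hκim
  have hfin : ∃ ζ : ℤ√5, (⟨X, Y⟩ : ℤ√5) = ζ^5 := by
    have hn := Zsqrtd.norm_eq_mul_conj κ
    have hs : star κ = (star η)^5 := by rw [hη, star_pow]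
    rw [Int.cast_one, one_mul] at hβκ
    rcases hκn with h1 | h1
    · rw [h1, Int.cast_one] at hn
      refine ⟨β * star η, ?_⟩
      rw [mul_pow, ← hs, hβκ, mul_assoc, ← hn, mul_one]
    · rw [h1, Int.cast_neg, Int.cast_one] at hn
      refine ⟨-(β * star η), ?_⟩
      rw [Odd.neg_pow (by decide), mul_pow, ← hs, hβκ, mul_assoc, ← hn]; simp
  obtain ⟨⟨x, y⟩, hζ⟩ := hfin
  rw [z_pow5] at hζ
  refine ⟨x, y, ?_, ?_⟩
  · have := congrArg Zsqrtd.re hζ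
    simp only at this; rw [this]; ring
  · have := congrArg Zsqrtd.im hζ
    simp only at this; rw [this]; ring

theorem cop_prime (p a : ℤ) (hp : Prime p) (h : ¬ p ∣ a) : IsCoprime a p :=
  ((Prime.coprime_iff_not_dvd hp).2 h).symm

theorem Qcop15 (σ x y : ℤ) (hσ : σ = 1 ∨ σ = -1) (hco : IsCoprime x y)
    (h5 : ¬ (5:ℤ) ∣ x) : IsCoprime (x^4 + 10*σ*x^2*y^2 + 5*y^4) (15 * y) := by
  have hy : IsCoprime (x^4 + 10*σ*x^2*y^2 + 5*y^4) y := by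
    have h1 : IsCoprime (x^4) y := hco.pow_left
    have h2 := h1.add_mul_right_left (10*σ*x^2*y + 5*y^3)
    rw [show x^4 + 10*σ*x^2*y^2 + 5*y^4 = x^4 + (10*σ*x^2*y + 5*y^3) * y by ring]
    exact h2
  have c5 : IsCoprime (x^4 + 10*σ*x^2*y^2 + 5*y^4) 5 := by
    have h1 : IsCoprime (x^4) 5 := (cop_prime 5 x (by norm_num) h5).pow_left
    have h2 := h1.add_mul_right_left (2*σ*x^2*y^2 + y^4)
    rw [show x^4 + 10*σ*x^2*y^2 + 5*y^4 = x^4 + (2*σ*x^2*y^2 + y^4) * 5 by ring]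
    exact h2
  have c3 : IsCoprime (x^4 + 10*σ*x^2*y^2 + 5*y^4) 3 := by
    apply cop_prime 3 _ (by norm_num)
    intro h
    have hz : ((x^4 + 10*σ*x^2*y^2 + 5*y^4 : ℤ) : ZMod 3) = 0 :=
      (ZMod.intCast_zmod_eq_zero_iff_dvd _ 3).2 h
    push_cast at hz
    have key : ∀ a b s : ZMod 3, (s = 1 ∨ s = -1) → a^4 + 10*s*a^2*b^2 + 5*b^4 = 0 → a = 0 ∧ b = 0 := by
      decide
    obtain ⟨ha, hb⟩ := key x y σ (by rcases hσ with rfl | rfl <;> simp) hz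
    have ha' : (3:ℤ) ∣ x := (ZMod.intCast_zmod_eq_zero_iff_dvd _ 3).1 ha
    have hb' : (3:ℤ) ∣ y := (ZMod.intCast_zmod_eq_zero_iff_dvd _ 3).1 hb
    have := hco.isUnit_of_dvd' ha' hb'
    rw [Int.isUnit_iff] at this; omega
  have := ((c3.mul_right c5).mul_right hy)
  norm_num at this
  exact this

theorem Qcop (σ x y : ℤ) (hσ : σ = 1 ∨ σ = -1) (hco : IsCoprime x y) (hodd : (x + y) % 2 = 1)
    (h5 : ¬ (5:ℤ) ∣ x) : IsCoprime (x^4 + 10*σ*x^2*y^2 + 5*y^4) (30 * y) := by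
  have c2 : IsCoprime (x^4 + 10*σ*x^2*y^2 + 5*y^4) 2 := by
    apply cop_prime 2 _ (by norm_num)
    intro h
    have h0 : Even (x^4 + 10*σ*x^2*y^2 + 5*y^4) := even_iff_two_dvd.2 h
    have h1 : Odd (x + y) := Int.odd_iff.2 hodd
    rw [Int.odd_add] at h1
    rcases Int.even_or_odd x with hx | hx
    · have hy' : Odd y := by rw [← Int.not_even_iff_odd, ← h1]; exact Int.not_odd_iff_even.2 hx
      obtain ⟨a, rfl⟩ := hx
      obtain ⟨b, rfl⟩ := hy'
      obtain ⟨c, hc⟩ := h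
      ring_nf at hc
      omega
    · have hy' : Even y := h1.1 hx
      obtain ⟨a, rfl⟩ := hx
      obtain ⟨b, rfl⟩ := hy'
      obtain ⟨c, hc⟩ := h
      ring_nf at hc
      omega
  have := c2.mul_right (Qcop15 σ x y hσ hco h5)
  rw [← mul_assoc] at this
  norm_num at this
  exact this

/-- properties of the coordinates of the fifth root -/
theorem root_props (X Y x y : ℤ) (hco : IsCoprime X Y) (hodd : (X + Y) % 2 = 1) (h5 : ¬ (5:ℤ) ∣ X)
    (hX : X = x * (x^4 + 50*x^2*y^2 + 125*y^4)) (hY : Y = 5 * y * (x^4 + 10*x^2*y^2 + 5*y^4)) :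
    IsCoprime x y ∧ (x + y) % 2 = 1 ∧ ¬ (5:ℤ) ∣ x := by
  refine ⟨?_, ?_, ?_⟩
  · rw [hX, hY] at hco
    have h1 := hco.of_mul_left_left.of_mul_right_left
    exact h1.of_mul_right_right
  · by_contra hcon
    have h1 : Even (x + y) := Int.even_iff.2 (by omega)
    have h2 : Odd (X + Y) := Int.odd_iff.2 hodd
    rw [hX, hY] at h2
    rw [Int.even_add] at h1
    rcases Int.even_or_odd y with hy | hy
    · have hx := h1.2 hy
      revert h2
      rw [imp_false, Int.not_odd_iff_even]
      exact (hx.mul_right _).add ((hy.mul_left 5).mul_right _)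
    · have hx : Odd x := by rw [← Int.not_even_iff_odd, h1]; exact Int.not_even_iff_odd.2 hy
      obtain ⟨a, rfl⟩ := hx
      obtain ⟨b, rfl⟩ := hy
      obtain ⟨c, hc⟩ := h2
      ring_nf at hc
      omega
  · intro h
    exact h5 (by rw [hX]; exact h.mul_right _)

theorem step (σ x y t N s : ℤ) (j : ℕ) (hσ : σ = 1 ∨ σ = -1) (hco : IsCoprime x y) (hy0 : y ≠ 0)
    (hy5 : (5:ℤ) ∣ y) (hodd : (x + y) % 2 = 1) (hQ : x^4 + 10*σ*x^2*y^2 + 5*y^4 = t^5)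
    (hN : y * N = s^5) (hN0 : N ∣ 30^j) :
    ∃ (x1 y1 t1 N1 s1 : ℤ) (j1 : ℕ), IsCoprime x1 y1 ∧ y1 ≠ 0 ∧ (5:ℤ) ∣ y1 ∧ (x1 + y1) % 2 = 1 ∧
      x1^4 + 10*1*x1^2*y1^2 + 5*y1^4 = t1^5 ∧ y1 * N1 = s1^5 ∧ N1 ∣ 30^j1 ∧ |y1| < |y| := by
  have hσ2 : σ^2 = 1 := by rcases hσ with rfl | rfl <;> norm_num
  have hx5 : ¬ (5:ℤ) ∣ x := by
    intro hX
    have := hco.isUnit_of_dvd' hX hy5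
    rw [Int.isUnit_iff] at this; omega
  have hXodd : Odd (x^2 + 5*σ*y^2) := by
    have h1 : Odd (x + y) := Int.odd_iff.2 hodd
    have h5 : Odd (5 * σ) := by rcases hσ with rfl | rfl <;> decide
    rw [Int.odd_add] at h1 ⊢
    rw [Int.odd_pow' (by norm_num), h1, Int.even_mul, Int.even_pow' (by norm_num)]
    constructor
    · intro h; right; exact h
    · rintro (h | h)
      · exact absurd h (Int.not_even_iff_odd.2 h5)
      · exact h
  have hcoXY : IsCoprime (x^2 + 5*σ*y^2) (2*y^2) := by
    apply IsCoprime.mul_right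
    · apply cop_prime 2 _ (by norm_num)
      rw [← even_iff_two_dvd]; exact Int.not_even_iff_odd.2 hXodd
    · apply IsCoprime.pow_right
      have h1 : IsCoprime (x^2) y := hco.pow_left
      have h2 := h1.add_mul_right_left (5*σ*y)
      rw [show x^2 + 5*σ*y^2 = x^2 + (5*σ*y) * y by ring]
      exact h2
  have hn : (x^2 + 5*σ*y^2)^2 - 5 * (2*y^2)^2 = t^5 := by
    rw [← hQ]; linear_combination 25 * y^4 * hσ2
  have hXY : (x^2 + 5*σ*y^2 + 2 * y^2) % 2 = 1 := by
    have := Int.odd_iff.1 hXodd; omega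
  have ht : t % 2 = 1 := by
    rw [← Int.odd_iff, ← Int.odd_pow' (n := 5) (by norm_num), ← hn]
    exact (hXodd.pow).sub_even ⟨10*y^4, by ring⟩
  have hX5 : ¬ (5:ℤ) ∣ (x^2 + 5*σ*y^2) := by
    intro h
    have h5p : Prime (5:ℤ) := by norm_num
    apply hx5
    apply h5p.dvd_of_dvd_pow (n := 2)
    have := dvd_sub h (Dvd.intro (σ*y^2) rfl : (5:ℤ) ∣ 5 * (σ*y^2))
    rwa [show x^2 + 5*σ*y^2 - 5*(σ*y^2) = x^2 by ring] at this
  obtain ⟨x1, y1, e1, e2⟩ := fifth5 _ _ t hn hcoXY ht ((hy5.pow (n := 2) (by norm_num)).mul_left 2)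
  obtain ⟨p1, p2, p3⟩ := root_props _ _ x1 y1 hcoXY hXY hX5 e1 e2
  have hc := Qcop 1 x1 y1 (Or.inl rfl) p1 p2 p3
  set Q := x1^4 + 10*1*x1^2*y1^2 + 5*y1^4 with hQd
  have e2' : 2*y^2 = 5 * y1 * Q := by rw [e2, hQd]; ring
  have hc30 : IsCoprime Q 30 := hc.of_mul_right_left
  have hcy : IsCoprime Q y1 := hc.of_mul_right_right
  have hcN : IsCoprime Q N := (hc30.pow_right (n := j)).of_isCoprime_of_dvd_right hN0
  have hc80 : IsCoprime Q (80 * N^2) := by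
    apply IsCoprime.mul_right _ hcN.pow_right
    exact (hc30.pow_right (n := 4)).of_isCoprime_of_dvd_right (by norm_num)
  have hprod : Q * (y1 * (80 * N^2)) = (2*s^2)^5 := by
    rw [show (2*s^2)^5 = 32 * (s^5)^2 by ring, ← hN]
    linear_combination (-16*N^2) * e2'
  obtain ⟨⟨t1, ht1⟩, ⟨s1, hs1⟩⟩ := Int.eq_pow_of_mul_eq_pow_odd (hcy.mul_right hc80) (by decide) hprod
  have hy10 : y1 ≠ 0 := by
    rintro rfl
    simp at e2'; exact hy0 e2'
  refine ⟨x1, y1, t1, 80*N^2, s1, 4 + j*2, p1, hy10, ?_, p2, ht1, hs1, ?_, ?_⟩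
  · have h5p : Prime (5:ℤ) := by norm_num
    obtain ⟨g, hg⟩ := hy5
    have : (5:ℤ) ∣ y1 * Q := ⟨2*g^2, by rw [hg] at e2'; linarith⟩
    rcases h5p.dvd_or_dvd this with h | h
    · exact h
    · exfalso
      have := hc30.isUnit_of_dvd' h (by norm_num)
      rw [Int.isUnit_iff] at this; omega
  · rw [pow_add, pow_mul]
    exact mul_dvd_mul (by norm_num) (pow_dvd_pow_of_dvd hN0 2)
  · by_contra hle
    push Not at hle
    have h1 : 1 ≤ |y| := Int.one_le_abs hy0
    have hQ5 : 5*y1^4 ≤ Q := by rw [hQd]; nlinarith [sq_nonneg (x1^2), sq_nonneg (x1*y1)]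
    have e3 : 2*|y|^2 = 5 * |y1| * Q := by
      have := congrArg abs e2'
      rw [abs_mul, abs_mul, abs_mul, abs_pow] at this
      rw [abs_of_nonneg (show 0 ≤ Q by nlinarith [sq_nonneg (y1^2)])] at this
      simpa using this
    have hq4 : y1^4 = |y1|^4 := by rw [← abs_pow, abs_of_nonneg (by positivity)]
    rw [hq4] at hQ5
    generalize |y| = Y at *
    generalize |y1| = Z at *
    have hZ1 : 1 ≤ Z := by linarith
    have a1 : 5*Z*(5*Z^4) ≤ 5*Z*Q := by gcongr
    have a2 : Y^2 ≤ Z^2 := by gcongr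
    have a3 : 1 ≤ Z^3 := one_le_pow₀ hZ1
    nlinarith [sq_nonneg Z, mul_le_mul_of_nonneg_left a3 (sq_nonneg Z)]

theorem descent (n : ℕ) : ∀ (σ x y t N s : ℤ) (j : ℕ), y.natAbs = n → (σ = 1 ∨ σ = -1) → IsCoprime x y →
    y ≠ 0 → (5:ℤ) ∣ y → (x + y) % 2 = 1 → x^4 + 10*σ*x^2*y^2 + 5*y^4 = t^5 →
    y * N = s^5 → N ∣ 30^j → False := by
  induction n using Nat.strong_induction_on with
  | _ n ih =>
    intro σ x y t N s j hn h1 h2 h3 h4 h5 h6 h7 h8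
    obtain ⟨x1, y1, t1, N1, s1, j1, g2, g3, g4, g5, g6, g7, g8, g9⟩ := step σ x y t N s j h1 h2 h3 h4 h5 h6 h7 h8
    rw [Int.abs_eq_natAbs, Int.abs_eq_natAbs] at g9
    exact ih y1.natAbs (by omega) 1 x1 y1 t1 N1 s1 j1 rfl (Or.inl rfl) g2 g3 g4 g5 g6 g7 g8

/-- The odd case. -/
theorem oddcase (u v t : ℤ) (hco : IsCoprime u v) (hu : u % 2 = 1) (hv : v % 2 = 1) (h5 : (5:ℤ) ∣ v)
    (h : u^4 - 10*u^2*v^2 + 5*v^4 = 4 * t^5) : False := by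
  obtain ⟨X, hX⟩ : ∃ X, u^2 - 5*v^2 = 4*X := by
    obtain ⟨a, rfl⟩ : ∃ a, u = 2*a+1 := ⟨u/2, by omega⟩
    obtain ⟨b, rfl⟩ : ∃ b, v = 2*b+1 := ⟨v/2, by omega⟩
    exact ⟨a^2+a-5*b^2-5*b-1, by ring⟩
  have hu5 : ¬ (5:ℤ) ∣ u := by
    intro hX
    have := hco.isUnit_of_dvd' hX h5
    rw [Int.isUnit_iff] at this; omega
  have hvo : Odd v := Int.odd_iff.2 hv
  have hv2 : Odd (v^2) := hvo.pow
  have hn : (2*X)^2 - 5*(v^2)^2 = t^5 := by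
    have : (u^2-5*v^2)^2 = (4*X)^2 := by rw [hX]
    linarith
  have hcoXY : IsCoprime (2*X) (v^2) := by
    apply IsCoprime.pow_right
    have h1 : IsCoprime (u^2) v := hco.pow_left
    have h2 := h1.add_mul_right_left (-5*v)
    rw [show u^2 + -5*v*v = 2 * (2*X) by linarith] at h2
    exact h2.of_mul_left_right
  have ht : t % 2 = 1 := by
    rw [← Int.odd_iff, ← Int.odd_pow' (n := 5) (by norm_num), ← hn]
    have ho : Odd (5*(v^2)^2) := Odd.mul (by decide) hv2.pow
    exact Even.sub_odd ⟨2*X^2, by ring⟩ ho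
  have hXY : (2*X + v^2) % 2 = 1 := by
    have := Int.odd_iff.1 hv2; omega
  have hX5 : ¬ (5:ℤ) ∣ 2*X := by
    intro h
    have h5p : Prime (5:ℤ) := by norm_num
    apply hu5
    apply h5p.dvd_of_dvd_pow (n := 2)
    obtain ⟨g, hg⟩ := h
    exact ⟨2*g + v^2, by linarith⟩
  obtain ⟨x1, y1, e1, e2⟩ := fifth5 _ _ t hn hcoXY ht (h5.pow (n := 2) (by norm_num))
  obtain ⟨p1, p2, p3⟩ := root_props _ _ x1 y1 hcoXY hXY hX5 e1 e2
  have hc := Qcop 1 x1 y1 (Or.inl rfl) p1 p2 p3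
  set Q := x1^4 + 10*1*x1^2*y1^2 + 5*y1^4 with hQd
  have hc30 : IsCoprime Q 30 := hc.of_mul_right_left
  have hcy : IsCoprime Q y1 := hc.of_mul_right_right
  have hc5 : IsCoprime Q 5 := hc30.of_isCoprime_of_dvd_right (by norm_num)
  have e2' : Q * (5*y1) = v^2 := by rw [e2, hQd]; ring
  have hyo : Odd y1 := by
    rw [← e2', Int.odd_mul, Int.odd_mul] at hv2; exact hv2.2.2
  obtain ⟨b, hb⟩ := hyo
  obtain ⟨a, ha⟩ : ∃ a, x1 = 2*a := ⟨x1/2, by omega⟩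
  have hQ8 : Q % 8 = 5 := by
    rw [hQd, ha, hb]
    rw [show (2*a)^4 + 10*1*(2*a)^2*(2*b+1)^2 + 5*(2*b+1)^4
      = 8 * (2*a^4 + 5*a^2*(2*b+1)^2 + 5*(2*b^4+4*b^3+3*b^2+b)) + 5 by ring]
    omega
  have hQ0 : 0 ≤ Q := by rw [hQd]; positivity
  obtain ⟨w, hw⟩ := Int.sq_of_isCoprime (hc5.mul_right hcy) e2'
  have hw' : Q = w^2 := by
    rcases hw with hw | hw
    · exact hw
    · nlinarith [sq_nonneg w]
  rw [hw'] at hQ8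
  have h8 : w % 8 = 0 ∨ w % 8 = 1 ∨ w % 8 = 2 ∨ w % 8 = 3 ∨ w % 8 = 4 ∨ w % 8 = 5 ∨ w % 8 = 6 ∨ w % 8 = 7 := by
    omega
  rcases h8 with h | h | h | h | h | h | h | h <;> simp [pow_two, Int.mul_emod, h] at hQ8

theorem fin (u v b : ℤ) (hco : IsCoprime u v) (h5 : ¬ (5:ℤ) ∣ u) (hb : b ≠ 0)
    (h : v * (u^4 - 10*u^2*v^2 + 5*v^4) = 2700 * b^5) : False := by
  have hF : u^4 + 10*(-1)*u^2*v^2 + 5*v^4 = u^4 - 10*u^2*v^2 + 5*v^4 := by ring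
  have hc15 := Qcop15 (-1) u v (Or.inr rfl) hco h5
  have hv0 : v ≠ 0 := by
    rintro rfl
    simp at h; exact hb h
  have h5p : Prime (5:ℤ) := by norm_num
  have hv5 : (5:ℤ) ∣ v := by
    have h1 : (5:ℤ) ∣ v * (u^4 - 10*u^2*v^2 + 5*v^4) := ⟨540*b^5, by rw [h]; ring⟩
    rcases h5p.dvd_or_dvd h1 with h | h
    · exact h
    · exfalso
      rw [hF] at hc15
      have := hc15.of_mul_right_left.isUnit_of_dvd' h (by norm_num)
      rw [Int.isUnit_iff] at this; omega
  by_cases hodd : (u + v) % 2 = 1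
  · have hc := Qcop (-1) u v (Or.inr rfl) hco hodd h5
    have hc30 := hc.of_mul_right_left
    have hcy := hc.of_mul_right_right
    have hN : IsCoprime (u^4 + 10*(-1)*u^2*v^2 + 5*v^4) (2700^4) :=
      (hc30.pow_right (n := 12)).of_isCoprime_of_dvd_right (by norm_num)
    have hprod : (u^4 + 10*(-1)*u^2*v^2 + 5*v^4) * (v * 2700^4) = (2700*b)^5 := by
      rw [hF]; linear_combination 2700^4 * h
    obtain ⟨⟨t, ht⟩, ⟨s, hs⟩⟩ := Int.eq_pow_of_mul_eq_pow_odd (hcy.mul_right hN) (by decide) hprod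
    exact descent _ (-1) u v t (2700^4) s 12 rfl (Or.inr rfl) hco hv0 hv5 hodd ht hs (by norm_num)
  · have huv : u % 2 = 1 ∧ v % 2 = 1 := by
      by_contra hcon
      have h1 : (2:ℤ) ∣ u := by omega
      have h2 : (2:ℤ) ∣ v := by omega
      have := hco.isUnit_of_dvd' h1 h2
      rw [Int.isUnit_iff] at this; omega
    obtain ⟨hu, hv⟩ := huv
    obtain ⟨F, hF4⟩ : ∃ F, u^4 - 10*u^2*v^2 + 5*v^4 = 4 * F := by
      obtain ⟨a, rfl⟩ : ∃ a, u = 2*a+1 := ⟨u/2, by omega⟩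
      obtain ⟨b, rfl⟩ : ∃ b, v = 2*b+1 := ⟨v/2, by omega⟩
      exact ⟨4*(a^2+a-5*b^2-5*b-1)^2 - 5*(2*b+1)^4, by ring⟩
    rw [hF, hF4] at hc15
    have hc15' := hc15.of_mul_left_right
    have hN : IsCoprime F (675^4) :=
      (hc15'.of_mul_right_left.pow_right (n := 12)).of_isCoprime_of_dvd_right (by norm_num)
    have hprod : F * (v * 675^4) = (675*b)^5 := by
      rw [hF4] at h; linarith
    obtain ⟨⟨t, ht⟩, -⟩ := Int.eq_pow_of_mul_eq_pow_odd (hc15'.of_mul_right_right.mul_right hN) (by decide) hprod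
    exact oddcase u v t hco hu hv hv5 (by rw [hF4, ht])

theorem L5 (m A c D : ℤ) (hm : 0 < m) (hA : 0 < A) (hA5 : ¬ (5:ℤ) ∣ A) (hD5 : (5:ℤ) ∣ D)
    (hco : IsCoprime A D) (h : c^2 + 5*D^2 = m * A^5) :
    ∃ u v e f k : ℤ, (k = 1 ∨ k = 2) ∧ u^2 + 5*v^2 = A * k ∧ ¬ (5:ℤ) ∣ u ∧ e^2 + 125*f^2 = m * k^5 ∧
      5*v*(u^4 - 10*u^2*v^2 + 5*v^4) * e - 5*f*(u*(u^4 - 50*u^2*v^2+125*v^4)) = k^5 * D := by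
  obtain ⟨β, κ, k, hk, hk0, hβ, hβκ, hκ⟩ := gen (-5) m A c D (Or.inr rfl) hA.ne' hm.ne' (by linarith) hco
  obtain ⟨u, v⟩ := β
  obtain ⟨e, f⟩ := κ
  rw [Zsqrtd.norm_def] at hβ hκ
  simp only at hβ hκ
  have hk12 : k = 1 ∨ k = 2 := by
    have : 0 ≤ A * k := by rw [← hβ]; nlinarith [sq_nonneg u, sq_nonneg v]
    have := nonneg_of_mul_nonneg_right this hA
    rw [abs_le] at hk
    omega
  have h5p : Prime (5:ℤ) := by norm_num
  have hu5 : ¬ (5:ℤ) ∣ u := by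
    rintro ⟨g, rfl⟩
    have h1 : (5:ℤ) ∣ A * k := ⟨5*g^2 + v^2, by rw [← hβ]; ring⟩
    rcases h5p.dvd_or_dvd h1 with h | h
    · exact hA5 h
    · omega
  rw [z_pow5] at hβκ
  have hre := congrArg Zsqrtd.re hβκ
  have him := congrArg Zsqrtd.im hβκ
  simp at hre him
  have hk5 : m * (5*v*(u^4 - 10*u^2*v^2 + 5*v^4) * e - f*(u*(u^4 - 50*u^2*v^2+125*v^4))) = m * (k^5 * D) := by
    linear_combination e * him - f * hre + D * hκ
  have hk5' := mul_left_cancel₀ hm.ne' hk5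
  have hf : (5:ℤ) ∣ f := by
    obtain ⟨g, rfl⟩ := hD5
    have h1 : (5:ℤ) ∣ f * (u * u^4) :=
      ⟨v*(u^4 - 10*u^2*v^2 + 5*v^4) * e - k^5*g - f*u*(-10*u^2*v^2+25*v^4), by linarith⟩
    rcases h5p.dvd_or_dvd h1 with h | h
    · exact h
    · rcases h5p.dvd_or_dvd h with h | h
      · exact absurd h hu5
      · exact absurd (h5p.dvd_of_dvd_pow h) hu5
  obtain ⟨f', rfl⟩ := hf
  exact ⟨u, v, e, f', k, hk12, by linarith, hu5, by linarith, by linarith⟩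

theorem small (e f n : ℤ) (h : e^2 + 125*f^2 = n) (hn : n ≤ 5184) :
    ∃ p q : ℕ, p < 73 ∧ q < 7 ∧ (p:ℤ)^2 + 125*(q:ℤ)^2 = n ∧ p = e.natAbs ∧ q = f.natAbs := by
  have h1 : ((e.natAbs : ℤ))^2 = e^2 := Int.natAbs_sq e
  have h2 : ((f.natAbs : ℤ))^2 = f^2 := Int.natAbs_sq f
  refine ⟨e.natAbs, f.natAbs, ?_, ?_, by rw [h1, h2, h], rfl, rfl⟩
  · by_contra hc
    push Not at hc
    have : (73:ℤ) ≤ e.natAbs := by exact_mod_cast hc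
    nlinarith [sq_nonneg f]
  · by_contra hc
    push Not at hc
    have : (7:ℤ) ≤ f.natAbs := by exact_mod_cast hc
    nlinarith [sq_nonneg e]

set_option maxRecDepth 20000 in
set_option synthInstance.maxHeartbeats 400000 in
set_option synthInstance.maxSize 2000 in
theorem smallN : ∀ p : ℕ, p < 73 → ∀ q : ℕ, q < 7 →
    p^2 + 125*q^2 ≠ 32 ∧ p^2 + 125*q^2 ≠ 2 ∧ p^2 + 125*q^2 ≠ 2592 ∧ p^2 + 125*q^2 ≠ 162 ∧
    (p^2 + 125*q^2 = 1 → q = 0 ∧ p = 1) ∧ (p^2 + 125*q^2 = 64 → q = 0 ∧ p = 8) ∧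
    (p^2 + 125*q^2 = 81 → q = 0 ∧ p = 9) ∧ (p^2 + 125*q^2 = 5184 → q = 0 ∧ p = 72) := by
  decide +kernel

theorem small' (e f : ℤ) : e^2 + 125*f^2 ≠ 32 ∧ e^2 + 125*f^2 ≠ 2 ∧ e^2 + 125*f^2 ≠ 2592 ∧
    e^2 + 125*f^2 ≠ 162 ∧
    (e^2 + 125*f^2 = 1 → f = 0 ∧ (e = 1 ∨ e = -1)) ∧ (e^2 + 125*f^2 = 64 → f = 0 ∧ (e = 8 ∨ e = -8)) ∧
    (e^2 + 125*f^2 = 81 → f = 0 ∧ (e = 9 ∨ e = -9)) ∧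
    (e^2 + 125*f^2 = 5184 → f = 0 ∧ (e = 72 ∨ e = -72)) := by
  refine ⟨?_, ?_, ?_, ?_, ?_, ?_, ?_, ?_⟩
  all_goals
    intro h
    obtain ⟨p, q, hp, hq, h1, h2, h3⟩ := small e f _ h (by norm_num)
    obtain ⟨a1, a2, a3, a4, a5, a6, a7, a8⟩ := smallN p hp q hq
    norm_cast at h1 <;> first
    | exact absurd h1 a1
    | exact absurd h1 a2
    | exact absurd h1 a3
    | exact absurd h1 a4
    | (have := a5 h1; omega)
    | (have := a6 h1; omega)
    | (have := a7 h1; omega)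
    | (have := a8 h1; omega)

theorem cop_uv (u v A : ℤ) (h : u^2 + 5*v^2 = A) (hc : IsCoprime A v) : IsCoprime u v := by
  have h2 := hc.add_mul_right_left (-5*v)
  rw [← h, show u^2 + 5*v^2 + -5*v*v = u^2 by ring] at h2
  exact (IsCoprime.pow_left_iff (by norm_num)).1 h2

theorem case1 (A c b : ℤ) (hA : 0 < A) (hb : b ≠ 0) (hco : IsCoprime A (13500*b^5))
    (h : c^2 + 5*(13500*b^5)^2 = A^5) : False := by
  have hA5 : ¬ (5:ℤ) ∣ A := by
    intro h5
    have := hco.isUnit_of_dvd' h5 ⟨2700*b^5, by ring⟩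
    rw [Int.isUnit_iff] at this; omega
  obtain ⟨u, v, e, f, k, hk, h1, h2, h3, h4⟩ := L5 1 A c (13500*b^5) one_pos hA hA5 ⟨2700*b^5, by ring⟩ hco
    (by linarith)
  obtain ⟨a1, a2, a3, a4, a5, a6, a7, a8⟩ := small' e f
  rcases hk with rfl | rfl
  · norm_num at h3
    obtain ⟨rfl, he⟩ := a5 h3
    have hcuv : IsCoprime u v := by
      apply cop_uv u v (A * 1) h1
      rw [mul_one]
      have hd : v ∣ 13500*b^5 := ⟨5*(u^4 - 10*u^2*v^2 + 5*v^4)*e, by linarith⟩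
      exact hco.of_isCoprime_of_dvd_right hd
    rcases he with rfl | rfl
    · exact fin u v b hcuv h2 hb (by linarith)
    · exact fin u v (-b) hcuv h2 (neg_ne_zero.2 hb) (by linarith)
  · norm_num at h3
    exact a1 h3

theorem case2 (A c b : ℤ) (hA : 0 < A) (hAo : A % 2 = 1) (hbo : b % 2 = 1) (hco : IsCoprime A (3375*b^5))
    (h : c^2 + 5*(3375*b^5)^2 = 2*A^5) : False := by
  have hb : b ≠ 0 := by rintro rfl; omega
  have hA5 : ¬ (5:ℤ) ∣ A := by
    intro h5
    have := hco.isUnit_of_dvd' h5 ⟨675*b^5, by ring⟩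
    rw [Int.isUnit_iff] at this; omega
  obtain ⟨u, v, e, f, k, hk, h1, h2, h3, h4⟩ := L5 2 A c (3375*b^5) two_pos hA hA5 ⟨675*b^5, by ring⟩ hco
    (by linarith)
  obtain ⟨a1, a2, a3, a4, a5, a6, a7, a8⟩ := small' e f
  rcases hk with rfl | rfl
  · norm_num at h3
    exact a2 h3
  · norm_num at h3
    obtain ⟨rfl, he⟩ := a6 h3
    have hA2 : IsCoprime A 2 := cop_prime 2 A (by norm_num) (by omega)
    have hvo : v % 2 = 1 := by
      by_contra hv
      obtain ⟨w, rfl⟩ : ∃ w, v = 2*w := ⟨v/2, by omega⟩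
      rcases Int.emod_two_eq_zero_or_one u with hu | hu
      · obtain ⟨g, rfl⟩ : ∃ w, u = 2*w := ⟨u/2, by omega⟩
        have : A = 2 * (g^2+5*w^2) := by linarith
        omega
      · obtain ⟨g, rfl⟩ : ∃ w, u = 2*w+1 := ⟨u/2, by omega⟩
        have : 1 + 2 * (2*g^2+2*g+10*w^2) = A * 2 := by linarith
        omega
    have hcuv : IsCoprime u v := by
      apply cop_uv u v (A * 2) h1
      apply IsCoprime.mul_left
      · have hd : v ∣ 2^5*(3375*b^5) := ⟨5*(u^4 - 10*u^2*v^2 + 5*v^4)*e, by linarith⟩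
        exact (hA2.pow_right.mul_right hco).of_isCoprime_of_dvd_right hd
      · exact (cop_prime 2 v (by norm_num) (by omega)).symm
    rcases he with rfl | rfl
    · exact fin u v b hcuv h2 hb (by linarith)
    · exact fin u v (-b) hcuv h2 (neg_ne_zero.2 hb) (by linarith)

theorem case3 (A c D : ℤ) (hA : 0 < A) (hD : (5:ℤ) ∣ D) (hD3 : ¬ (3:ℤ) ∣ D) (hco : IsCoprime A D)
    (h : c^2 + 5*D^2 = 81*A^5) : False := by
  have hA5 : ¬ (5:ℤ) ∣ A := by
    intro h5
    have := hco.isUnit_of_dvd' h5 hD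
    rw [Int.isUnit_iff] at this; omega
  obtain ⟨u, v, e, f, k, hk, h1, h2, h3, h4⟩ := L5 81 A c D (by norm_num) hA hA5 hD hco
    (by linarith)
  obtain ⟨a1, a2, a3, a4, a5, a6, a7, a8⟩ := small' e f
  rcases hk with rfl | rfl
  · norm_num at h3
    obtain ⟨rfl, he⟩ := a7 h3
    rcases he with rfl | rfl
    · exact hD3 ⟨5*v*(u^4 - 10*u^2*v^2 + 5*v^4)*3, by linarith⟩
    · exact hD3 ⟨-5*v*(u^4 - 10*u^2*v^2 + 5*v^4)*3, by linarith⟩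
  · norm_num at h3
    exact a3 h3

theorem case4 (A c D : ℤ) (hA : 0 < A) (hD : (5:ℤ) ∣ D) (hD3 : ¬ (3:ℤ) ∣ D) (hco : IsCoprime A D)
    (h : c^2 + 5*D^2 = 162*A^5) : False := by
  have hA5 : ¬ (5:ℤ) ∣ A := by
    intro h5
    have := hco.isUnit_of_dvd' h5 hD
    rw [Int.isUnit_iff] at this; omega
  obtain ⟨u, v, e, f, k, hk, h1, h2, h3, h4⟩ := L5 162 A c D (by norm_num) hA hA5 hD hco
    (by linarith)
  obtain ⟨a1, a2, a3, a4, a5, a6, a7, a8⟩ := small' e f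
  rcases hk with rfl | rfl
  · norm_num at h3
    exact a4 h3
  · norm_num at h3
    obtain ⟨rfl, he⟩ := a8 h3
    apply hD3
    rcases he with rfl | rfl
    · have : 4 * D = 9 * (5*v*(u^4 - 10*u^2*v^2 + 5*v^4)) := by linarith
      omega
    · have : 4 * D = -9 * (5*v*(u^4 - 10*u^2*v^2 + 5*v^4)) := by linarith
      omega

theorem sq_dvd_aux (p c : ℤ) (n : ℕ) (hp : Prime p) (h : p^(2*n+1) ∣ c^2) : p^(n+1) ∣ c := by
  induction n generalizing c with
  | zero =>
    have : p ∣ c^2 := by simpa using h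
    simpa using hp.dvd_of_dvd_pow this
  | succ n ih =>
    have h1 : p ∣ c := hp.dvd_of_dvd_pow ((dvd_pow_self p (by omega)).trans h)
    obtain ⟨w, rfl⟩ := h1
    have h2 : p^(2*n+1) ∣ w^2 := by
      have : p^2 * p^(2*n+1) ∣ p^2 * w^2 := by
        convert h using 1 <;> ring
      exact (mul_dvd_mul_iff_left (pow_ne_zero 2 hp.ne_zero)).1 this
    have := mul_dvd_mul_left p (ih w h2)
    rw [pow_succ']; exact this

theorem int_main (a b c : ℤ) (hb : b ≠ 0) (hco : IsCoprime a b)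
    (h : c^2 + 2^4*3^6*5^7*b^10 = a^5) : False := by
  have p2 : Prime (2:ℤ) := by norm_num
  have p3 : Prime (3:ℤ) := by norm_num
  have p5 : Prime (5:ℤ) := by norm_num
  have notboth : ∀ p : ℤ, Prime p → p ∣ a → ¬ p ∣ b := fun p hp h1 h2 =>
    hp.not_isUnit (hco.isUnit_of_dvd' h1 h2)
  have ha : 0 < a := by
    have h1 : 0 < b^10 := by positivity
    have : 0 < a^5 := by rw [← h]; nlinarith [sq_nonneg c]
    exact (Odd.pow_pos_iff (by decide)).1 this
  have h5 : ¬ (5:ℤ) ∣ a := by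
    intro h5
    obtain ⟨g, hg⟩ := h5
    have h1 : (5:ℤ)^3 ∣ c := sq_dvd_aux 5 c 2 p5
      ⟨g^5 - 2^4*3^6*5^2*b^10, by rw [hg] at h; linear_combination h⟩
    obtain ⟨c1, hc1⟩ := h1
    have h2 : (5:ℤ) ∣ g := p5.dvd_of_dvd_pow (n := 5)
      ⟨c1^2 + 2^4*3^6*5*b^10, by rw [hg, hc1] at h; linarith⟩
    obtain ⟨g1, hg1⟩ := h2
    have h3 : (5:ℤ) ∣ c1 := p5.dvd_of_dvd_pow (n := 2)
      ⟨5^3*g1^5 - 2^4*3^6*b^10, by rw [hg, hc1, hg1] at h; linarith⟩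
    obtain ⟨c2, hc2⟩ := h3
    have h4 : (5:ℤ) ∣ 2^4*3^6*b^10 :=
      ⟨5^2*g1^5 - c2^2, by rw [hg, hc1, hg1, hc2] at h; linarith⟩
    rcases p5.dvd_or_dvd h4 with h | h
    · norm_num at h
    · exact notboth 5 p5 ⟨g, hg⟩ (p5.dvd_of_dvd_pow h)
  have ca5 := cop_prime 5 a p5 h5
  by_cases h2 : (2:ℤ) ∣ a
  · have hb2 := notboth 2 p2 h2
    obtain ⟨A, rfl⟩ := h2
    have h1 : (2:ℤ)^2 ∣ c := by
      have := sq_dvd_aux 2 c 1 p2 ⟨2^2*A^5 - 2*3^6*5^7*b^10, by linear_combination h⟩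
      simpa using this
    obtain ⟨c1, rfl⟩ := h1
    have e : c1^2 + 3^6*5^7*b^10 = 2*A^5 := by linarith
    have hbo : b % 2 = 1 := by omega
    have hAo : A % 2 = 1 := by
      by_contra hA
      obtain ⟨A1, rfl⟩ : ∃ w, A = 2*w := ⟨A/2, by omega⟩
      have hb10 : Odd (b^5) := (Int.odd_iff.2 hbo).pow
      obtain ⟨g, hg⟩ := hb10
      have e' : c1^2 + 3^6*5^7*(b^5)^2 = 64*A1^5 := by linarith
      rw [hg] at e'
      rcases Int.emod_two_eq_zero_or_one c1 with hu | hu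
      · obtain ⟨w, rfl⟩ : ∃ w, c1 = 2*w := ⟨c1/2, by omega⟩
        ring_nf at e'; omega
      · obtain ⟨w, rfl⟩ : ∃ w, c1 = 2*w+1 := ⟨c1/2, by omega⟩
        ring_nf at e'; omega
    by_cases h3 : (3:ℤ) ∣ A
    · have hb3 := notboth 3 p3 (h3.mul_left 2)
      obtain ⟨B, rfl⟩ := h3
      obtain ⟨c2, rfl⟩ : (3:ℤ)^3 ∣ c1 := sq_dvd_aux 3 c1 2 p3 ⟨2*B^5 - 3*5^7*b^10, by linear_combination e⟩
      have hB : (3:ℤ) ∣ B := by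
        have : (3:ℤ) ∣ 2 * B^5 := ⟨c2^2 + 5^7*b^10, by linarith⟩
        rcases p3.dvd_or_dvd this with h | h
        · norm_num at h
        · exact p3.dvd_of_dvd_pow h
      obtain ⟨C, rfl⟩ := hB
      have cC5 : IsCoprime C 5 := ca5.of_mul_left_right.of_mul_left_right.of_mul_left_right
      have cCb : IsCoprime C b := hco.of_mul_left_right.of_mul_left_right.of_mul_left_right
      refine case4 C c2 (5^3*b^5) (by linarith) ⟨25*b^5, by ring⟩ ?_ (cC5.pow_right.mul_right cCb.pow_right)
        (by linarith)
      intro hd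
      rcases p3.dvd_or_dvd hd with h | h
      · norm_num at h
      · exact hb3 (p3.dvd_of_dvd_pow h)
    · have cA5 : IsCoprime A 5 := ca5.of_mul_left_right
      have cAb : IsCoprime A b := hco.of_mul_left_right
      have cA3 := cop_prime 3 A p3 h3
      have : IsCoprime A (3375*b^5) := by
        have := ((cA3.pow_right (n := 3)).mul_right (cA5.pow_right (n := 3))).mul_right (cAb.pow_right (n := 5))
        norm_num at this; exact this
      exact case2 A c1 b (by linarith) hAo hbo this (by linarith)
  · have ca2 := cop_prime 2 a p2 h2
    by_cases h3 : (3:ℤ) ∣ a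
    · have hb3 := notboth 3 p3 h3
      obtain ⟨B, rfl⟩ := h3
      obtain ⟨c2, rfl⟩ : (3:ℤ)^3 ∣ c := sq_dvd_aux 3 c 2 p3 ⟨B^5 - 2^4*3*5^7*b^10, by linear_combination h⟩
      have hB : (3:ℤ) ∣ B := by
        have : (3:ℤ) ∣ B^5 := ⟨c2^2 + 2^4*5^7*b^10, by linarith⟩
        exact p3.dvd_of_dvd_pow this
      obtain ⟨C, rfl⟩ := hB
      have cC5 : IsCoprime C 5 := ca5.of_mul_left_right.of_mul_left_right
      have cC2 : IsCoprime C 2 := ca2.of_mul_left_right.of_mul_left_right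
      have cCb : IsCoprime C b := hco.of_mul_left_right.of_mul_left_right
      refine case3 C c2 (2^2*5^3*b^5) (by linarith) ⟨100*b^5, by ring⟩ ?_
        ((cC2.pow_right.mul_right cC5.pow_right).mul_right cCb.pow_right) (by linarith)
      intro hd
      rcases p3.dvd_or_dvd hd with h | h
      · norm_num at h
      · exact hb3 (p3.dvd_of_dvd_pow h)
    · have ca3 := cop_prime 3 a p3 h3
      have : IsCoprime a (13500*b^5) := by
        have := (((ca2.pow_right (n := 2)).mul_right (ca3.pow_right (n := 3))).mul_right
          (ca5.pow_right (n := 3))).mul_right (hco.pow_right (n := 5))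
        norm_num at this; exact this
      exact case1 a c b ha hb this (by linarith)

theorem no_rational_points_case4 (X Y : ℚ) :
    Y ^ 2 ≠ X ^ 5 - 2 ^ 4 * 3 ^ 6 * 5 ^ 7 := by
  intro h
  have hq : (X.den : ℚ) ≠ 0 := by exact_mod_cast X.den_nz
  have hs : (Y.den : ℚ) ≠ 0 := by exact_mod_cast Y.den_nz
  have hX : X * X.den = X.num := Rat.mul_den_eq_num X
  have hY : Y * Y.den = Y.num := Rat.mul_den_eq_num Y
  have hint : Y.num^2 * (X.den:ℤ)^5 = (Y.den:ℤ)^2 * (X.num^5 - 2^4*3^6*5^7*(X.den:ℤ)^5) := by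
    have : (Y.num:ℚ)^2 * (X.den:ℚ)^5 = (Y.den:ℚ)^2 * ((X.num:ℚ)^5 - 2^4*3^6*5^7*(X.den:ℚ)^5) := by
      rw [← hX, ← hY]
      linear_combination (Y.den:ℚ)^2 * (X.den:ℚ)^5 * h
    exact_mod_cast this
  have cX : IsCoprime X.num (X.den:ℤ) := Rat.isCoprime_num_den X
  have cY : IsCoprime Y.num (Y.den:ℤ) := Rat.isCoprime_num_den Y
  have hden : (X.den:ℤ)^5 = (Y.den:ℤ)^2 := by
    apply Int.dvd_antisymm (by positivity) (by positivity)
    · have c1 : IsCoprime (X.num^5 - 2^4*3^6*5^7*(X.den:ℤ)^5) (X.den:ℤ) := by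
        have := (cX.pow_left (m := 5)).add_mul_right_left (-(2^4*3^6*5^7)*(X.den:ℤ)^4)
        rw [show X.num^5 - 2^4*3^6*5^7*(X.den:ℤ)^5 = X.num^5 + (-(2^4*3^6*5^7)*(X.den:ℤ)^4) * (X.den:ℤ) by ring]
        exact this
      have hd : (X.den:ℤ)^5 ∣ (Y.den:ℤ)^2 * (X.num^5 - 2^4*3^6*5^7*(X.den:ℤ)^5) := ⟨Y.num^2, by rw [← hint]; ring⟩
      exact (c1.pow_right (n := 5)).symm.dvd_of_dvd_mul_right hd
    · have hd : (Y.den:ℤ)^2 ∣ Y.num^2 * (X.den:ℤ)^5 := ⟨_, hint⟩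
      exact (cY.pow (m := 2) (n := 2)).symm.dvd_of_dvd_mul_left hd
  have hy2 : (Y.den:ℤ)^2 ≠ 0 := by exact_mod_cast pow_ne_zero 2 Y.den_nz
  have hmain : Y.num^2 = X.num^5 - 2^4*3^6*5^7*(X.den:ℤ)^5 := by
    rw [hden, mul_comm] at hint
    have := mul_left_cancel₀ hy2 hint
    rw [hden]; exact this
  have hdq : (X.den:ℤ)^2 ∣ (Y.den:ℤ) := by
    apply (Int.pow_dvd_pow_iff (n := 2) (by norm_num)).1
    rw [← hden]; exact ⟨X.den, by ring⟩
  obtain ⟨b, hb⟩ := hdq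
  have hx0 : (X.den:ℤ) ≠ 0 := by exact_mod_cast X.den_nz
  have hqb : (X.den:ℤ) = b^2 := by
    rw [hb] at hden
    apply mul_left_cancel₀ (pow_ne_zero 4 hx0)
    linarith
  rw [hqb] at cX hmain hx0
  apply int_main X.num b Y.num (by rintro rfl; simp at hx0)
    ((IsCoprime.pow_right_iff (by norm_num)).1 cX)
  rw [hmain]; ring
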